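/- Fix an integer k ≥ 416. Let G be a finite simple graph, L a 10-assignment for G, and α, β two L-colorings of G. Suppose G contains five distinct vertices a, b, c, d, e with ab, bc, cd, de, ac, bd edges of G, d_G(a) = d_G(e) = 5, and d_G(b) = d_G(c) = d_G(d) = 6. Let S = {a, b, c, d, e}. If there exists a k-good recoloring sequence in G − S from the restriction of α to G − S to the restriction of β to G − S, then there exists a k-good recoloring sequence in G from α to β. -/

import Mathlib

def IsLColoring {V : Type} (G : SimpleGraph V) (L : V → Finset ℕ) (φ : V → ℕ) : Prop :=
  (∀ v, φ v ∈ L v) ∧ ∀ ⦃u w : V⦄, G.Adj u w → φ u ≠ φ w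

def recolorCount {V : Type} {m : ℕ} (φ : Fin (m + 1) → V → ℕ) (v : V) : ℕ :=
  (Finset.univ.filter fun i : Fin m => φ i.castSucc v ≠ φ i.succ v).card

def IsRecolSeq {V : Type} (G : SimpleGraph V) (L : V → Finset ℕ) {m : ℕ}
    (φ : Fin (m + 1) → V → ℕ) (α β : V → ℕ) : Prop :=
  φ 0 = α ∧ φ (Fin.last m) = β ∧ (∀ i, IsLColoring G L (φ i)) ∧
    ∀ i : Fin m, ∃! v : V, φ i.castSucc v ≠ φ i.succ v

/-!
A recoloring sequence of `G − S` is a script of moves which ignores the vertices of `S`. A vertex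
`v ∈ S` without moves of its own has to make way whenever a neighbor is about to receive its color.
If `G.degree v + w < (L v).card`, then it can choose a color which also differs from the colors of
the next `w` moves of its neighbors, so that about a `w`-th of these moves make it change its color.
The degrees allow `w = 4` for `a` and `e` and `w = 3` for `b`, `c` and `d`, and all of them except
`a` would then change their colors slightly more than `k` times.

Therefore moves of `e`, and then of `d`, are first inserted into the script. While these moves are
planned, the neighbors in `S` without moves are disregarded, as they will make way later on, and
thus every inserted move avoids the next `5` threats. Executing the script with `a`, `b` and `c`
making way, `b` and `c` avoid an additional threat from time to time by having their neighbor `a`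
change its color first. A request to `a` costs it just one threat. Finally, two passes through `S`,
of which the first one removes the conflicts with the target coloring, establish the colors of the
target.
-/

/-- A finite list of moves `(v, x)`, each of which gives the vertex `v` the color `x`. -/
abbrev Script (V : Type) := List (V × ℕ)

theorem IsLColoring.update {V : Type} [DecidableEq V] {G : SimpleGraph V} {L : V → Finset ℕ}
    {γ : V → ℕ} {v : V} {x : ℕ} (hγ : IsLColoring G L γ) (hx : x ∈ L v)
    (hadj : ∀ u, G.Adj v u → γ u ≠ x) : IsLColoring G L (Function.update γ v x) := by
  refine ⟨fun u ↦ ?_, fun u w huw ↦ ?_⟩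
  · rcases eq_or_ne u v with rfl | hu
    · simpa using hx
    · simpa [hu] using hγ.1 u
  · rcases eq_or_ne u v with rfl | hu
    · simpa [huw.ne'] using (hadj w huw).symm
    · rcases eq_or_ne w v with rfl | hw
      · simpa [hu] using hadj u huw.symm
      · simpa [hu, hw] using hγ.2 huw

theorem IsRecolSeq.cons {V : Type} [DecidableEq V] {G : SimpleGraph V} {L : V → Finset ℕ} {m : ℕ}
    {ψ : Fin (m + 1) → V → ℕ} {γ δ : V → ℕ} {v : V} {x : ℕ} (hγ : IsLColoring G L γ)
    (hx : γ v ≠ x) (hψ : IsRecolSeq G L ψ (Function.update γ v x) δ) :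
    IsRecolSeq G L (Fin.cons γ ψ : Fin (m + 1 + 1) → V → ℕ) γ δ := by
  obtain ⟨hfirst, hlast, hcol, hstep⟩ := hψ
  refine ⟨rfl, ?_, Fin.cases hγ hcol, Fin.cases ⟨v, ?_, fun u hu ↦ ?_⟩ fun i ↦ ?_⟩
  · rw [← Fin.succ_last, Fin.cons_succ, hlast]
  · simpa [hfirst] using hx
  · by_contra hne
    simp [hfirst, hne] at hu
  · simpa [← Fin.succ_castSucc] using hstep i

theorem recolorCount_succ {V : Type} {m : ℕ} (φ : Fin (m + 1 + 1) → V → ℕ) (v : V) :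
    recolorCount φ v =
      (if φ 0 v ≠ φ 1 v then 1 else 0) + recolorCount (fun i ↦ φ i.succ) v := by
  rw [recolorCount, Fin.card_filter_univ_succ, recolorCount]
  simp only [← Fin.succ_castSucc, Fin.castSucc_zero, Fin.succ_zero_eq_one]
  split_ifs <;> omega

theorem exists_mem_avoiding {V : Type} (C : Finset ℕ) (γ : V → ℕ) (N : Finset V) (l : List ℕ)
    (h : N.card + l.length < C.card) : ∃ x ∈ C, (∀ u ∈ N, γ u ≠ x) ∧ x ∉ l := by
  have hcard : (N.image γ ∪ l.toFinset).card < C.card :=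
    (Finset.card_union_le _ _).trans_lt <|
      (add_le_add Finset.card_image_le l.toFinset_card_le).trans_lt h
  obtain ⟨x, hxC, hx⟩ := Finset.exists_mem_notMem_of_card_lt_card hcard
  simp only [Finset.mem_union, Finset.mem_image, List.mem_toFinset, not_or, not_exists,
    not_and] at hx
  exact ⟨x, hxC, hx⟩

theorem exists_color_avoiding {V : Type} (G : SimpleGraph V) [G.LocallyFinite]
    {L : V → Finset ℕ} (γ : V → ℕ) {v : V} (l : List ℕ)
    (h : G.degree v + l.length < (L v).card) :
    ∃ x ∈ L v, (∀ u, G.Adj v u → γ u ≠ x) ∧ x ∉ l := by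
  simpa using exists_mem_avoiding (L v) γ (G.neighborFinset v) l h

namespace Script

variable {V : Type} [DecidableEq V] {G : SimpleGraph V} {L : V → Finset ℕ} {S : Set V}
  {F F' : Script V} {γ γ' δ ε n m r σ : V → ℕ} {u v : V} {p : V × ℕ} {f x : ℕ}

/-- The number of moves of `v` in a script. -/
def moveCount (F : Script V) (v : V) : ℕ := F.countP (·.1 = v)

/-- The coloring obtained from `γ` by executing a script. -/
def run (γ : V → ℕ) (F : Script V) : V → ℕ :=
  F.foldl (fun γ p ↦ Function.update γ p.1 p.2) γ

/-- The script `F` with the moves of `v` deleted. -/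
def removeMoves (v : V) (F : Script V) : Script V := F.filter (·.1 ≠ v)

@[simp] theorem moveCount_nil : moveCount ([] : Script V) v = 0 := rfl

theorem moveCount_cons : moveCount (p :: F) v = moveCount F v + if p.1 = v then 1 else 0 := by
  simp [moveCount, List.countP_cons]

theorem moveCount_cons_eq_zero :
    moveCount (p :: F) v = 0 ↔ p.1 ≠ v ∧ moveCount F v = 0 := by
  rw [moveCount_cons]
  split_ifs with h <;> simp [h]

theorem moveCount_append : moveCount (F ++ F') = moveCount F + moveCount F' :=
  funext fun _ ↦ List.countP_append

theorem run_append : run γ (F ++ F') = run (run γ F) F' := List.foldl_append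

theorem run_apply_congr (F : Script V) {γ γ' : V → ℕ} (h : γ v = γ' v) :
    run γ F v = run γ' F v := by
  induction F generalizing γ γ' with
  | nil => exact h
  | cons p _ ih => exact ih (by simp [Function.update_apply, h])

theorem removeMoves_cons_self (x : ℕ) : removeMoves v ((v, x) :: F) = removeMoves v F := by
  simp [removeMoves]

theorem removeMoves_cons_of_ne (h : p.1 ≠ v) :
    removeMoves v (p :: F) = p :: removeMoves v F := by
  simp [removeMoves, h]

theorem removeMoves_eq_self (h : moveCount F v = 0) : removeMoves v F = F := by
  simpa [removeMoves, moveCount, List.countP_eq_zero] using h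

theorem moveCount_removeMoves (h : u ≠ v) : moveCount (removeMoves v F) u = moveCount F u := by
  rw [moveCount, removeMoves, List.countP_filter]
  exact List.countP_congr fun q _ ↦ by simpa using fun hq ↦ hq.trans_ne h

theorem run_removeMoves (F : Script V) (γ : V → ℕ) (h : u ≠ v) :
    run γ (removeMoves v F) u = run γ F u := by
  induction F generalizing γ with
  | nil => rfl
  | cons p F ih =>
    obtain ⟨q, x⟩ := p
    rcases eq_or_ne q v with rfl | hq
    · rw [removeMoves_cons_self, ih]
      exact run_apply_congr F (by simp [h])
    · rw [removeMoves_cons_of_ne hq]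
      exact ih _

/-- The moves in `F` have to respect the color of `u`. The vertices of `S` without a remaining
move are inactive: they are expected to make way for the moves of `F`. -/
def IsActive (S : Set V) (F : Script V) (u : V) : Prop := u ∉ S ∨ moveCount F u ≠ 0

/-- Every move of the script uses a color of the list of its vertex which no active neighbor has
at that time. For `S = ∅` this says that running the script from an `L`-coloring stays within the
`L`-colorings. -/
def IsValid (G : SimpleGraph V) (L : V → Finset ℕ) (S : Set V) : (V → ℕ) → Script V → Prop
  | _, [] => True
  | γ, p :: F => p.2 ∈ L p.1 ∧ (∀ u, G.Adj p.1 u → IsActive S F u → γ u ≠ p.2) ∧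
      IsValid G L S (Function.update γ p.1 p.2) F

theorem IsActive.cons (h : IsActive S F u) : IsActive S (p :: F) u :=
  h.imp_right fun h ↦ by rw [moveCount_cons]; omega

theorem not_isActive : ¬ IsActive S F u ↔ u ∈ S ∧ moveCount F u = 0 := by
  simp [IsActive]

theorem isActive_removeMoves (h : u ≠ v) :
    IsActive S (removeMoves v F) u ↔ IsActive S F u := by
  rw [IsActive, IsActive, moveCount_removeMoves h]

theorem IsValid.congr (hF : IsValid G L S γ F) (h : ∀ u, IsActive S F u → γ u = γ' u) :
    IsValid G L S γ' F := by
  induction F generalizing γ γ' with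
  | nil => trivial
  | cons p F ih =>
    refine ⟨hF.1, fun u hu hact ↦ h u hact.cons ▸ hF.2.1 u hu hact, ih hF.2.2 fun u hact ↦ ?_⟩
    simp [Function.update_apply, h u hact.cons]

theorem IsValid.update (hF : IsValid G L S γ F) (hvS : v ∈ S) (hv : moveCount F v = 0) :
    IsValid G L S (Function.update γ v x) F :=
  hF.congr fun u hact ↦ by
    rw [Function.update_of_ne]
    rintro rfl
    exact not_isActive.2 ⟨hvS, hv⟩ hact

theorem IsValid.append (hF : IsValid G L ∅ γ F) (hF' : IsValid G L ∅ (run γ F) F') :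
    IsValid G L ∅ γ (F ++ F') := by
  induction F generalizing γ with
  | nil => exact hF'
  | cons p F ih => exact ⟨hF.1, fun u hu _ ↦ hF.2.1 u hu (.inl (Set.notMem_empty u)),
      ih hF.2.2 hF'⟩

theorem IsValid.isLColoring_update (hγ : IsLColoring G L γ) (hF : IsValid G L ∅ γ (p :: F)) :
    IsLColoring G L (Function.update γ p.1 p.2) :=
  hγ.update hF.1 fun u hu ↦ hF.2.1 u hu (.inl (Set.notMem_empty u))

theorem IsValid.exists_isRecolSeq (hγ : IsLColoring G L γ) (hF : IsValid G L ∅ γ F) :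
    ∃ (M : ℕ) (ψ : Fin (M + 1) → V → ℕ),
      IsRecolSeq G L ψ γ (run γ F) ∧ ∀ u, recolorCount ψ u ≤ moveCount F u := by
  induction F generalizing γ with
  | nil => exact ⟨0, fun _ ↦ γ, ⟨rfl, rfl, fun _ ↦ hγ, fun i ↦ i.elim0⟩, by simp [recolorCount]⟩
  | cons p F ih =>
    obtain ⟨M, ψ, hψ, hcount⟩ := ih (hF.isLColoring_update hγ) hF.2.2
    by_cases hp : γ p.1 = p.2
    · refine ⟨M, ψ, ?_, fun u ↦ (hcount u).trans (by rw [moveCount_cons]; omega)⟩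
      rw [← hp, Function.update_eq_self] at hψ
      rwa [run, List.foldl_cons, ← hp, Function.update_eq_self]
    · refine ⟨M + 1, Fin.cons γ ψ, hψ.cons hγ hp, fun u ↦ ?_⟩
      have hchange : γ u ≠ ψ 0 u → p.1 = u := by
        rw [hψ.1, Function.update_apply]
        split_ifs with h <;> simp [h]
      have hstep := recolorCount_succ (Fin.cons γ ψ : Fin (M + 1 + 1) → V → ℕ) u
      rw [Fin.cons_zero, ← Fin.succ_zero_eq_one, Fin.cons_succ] at hstep
      simp only [Fin.cons_succ] at hstep
      have := hcount u
      rw [hstep, moveCount_cons]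
      split_ifs <;> grind

theorem exists_isValid_of_isRecolSeq {m : ℕ} {φ : Fin (m + 1) → ↥(Sᶜ) → ℕ} {γ : V → ℕ}
    {β : ↥(Sᶜ) → ℕ} (hφ : IsRecolSeq (G.induce Sᶜ) (fun u ↦ L u.1) φ (fun u ↦ γ u.1) β) :
    ∃ F : Script V, IsValid G L S γ F ∧ (∀ v ∈ S, moveCount F v = 0) ∧
      (∀ u : ↥(Sᶜ), run γ F u = β u) ∧ ∀ u : ↥(Sᶜ), moveCount F u ≤ recolorCount φ u := by
  induction m generalizing γ with
  | zero =>
    obtain ⟨hfirst, hlast, -, -⟩ := hφ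
    exact ⟨[], trivial, by simp, fun u ↦ congrFun (hfirst.symm.trans hlast) u, by simp⟩
  | succ m ih =>
    obtain ⟨hfirst, hlast, hcol, hstep⟩ := hφ
    obtain ⟨w, hw, hw_unique⟩ := hstep 0
    simp only [Fin.castSucc_zero, Fin.succ_zero_eq_one] at hw hw_unique
    have hφ₁ : φ 1 = fun u : ↥(Sᶜ) ↦ Function.update γ (w : V) (φ 1 w) u := by
      funext u
      rcases eq_or_ne u w with rfl | hu
      · simp
      · rw [Function.update_of_ne (Subtype.coe_ne_coe.2 hu), ← congrFun hfirst u]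
        by_contra hne
        exact hu (hw_unique u (Ne.symm hne))
    obtain ⟨F, hF, hS, hrun, hcount⟩ := ih (φ := fun i ↦ φ i.succ)
      ⟨hφ₁, hlast, fun i ↦ hcol i.succ, fun i ↦ hstep i.succ⟩
    refine ⟨((w : V), φ 1 w) :: F, ⟨(hcol 1).1 w, fun u hu hact ↦ ?_, hF⟩, fun v hv ↦ ?_, hrun,
      fun u ↦ ?_⟩
    · have huS : u ∉ S := hact.elim id fun h huS ↦ h (hS u huS)
      have := (hcol 1).2 (u := ⟨u, huS⟩) (w := w) hu.symm
      rwa [congrFun hφ₁ ⟨u, huS⟩, Function.update_of_ne hu.ne'] at this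
    · rw [moveCount_cons, hS v hv, if_neg (by rintro rfl; exact w.2 hv)]
    · have := hcount u
      rw [moveCount_cons, recolorCount_succ]
      split_ifs with h₁ h₂ h₂
      · omega
      · exact absurd (Subtype.ext h₁ ▸ hw) h₂
      all_goals omega

/-- `γ` can be transformed into `δ` within the `L`-colorings by recoloring each vertex `v` at most
`n v` times. -/
def Recolorable (G : SimpleGraph V) (L : V → Finset ℕ) (n γ δ : V → ℕ) : Prop :=
  ∃ F : Script V, IsValid G L ∅ γ F ∧ run γ F = δ ∧ moveCount F ≤ n

theorem Recolorable.refl (γ : V → ℕ) : Recolorable G L 0 γ γ :=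
  ⟨[], trivial, rfl, fun _ ↦ le_rfl⟩

theorem Recolorable.single (hx : x ∈ L v) (hadj : ∀ u, G.Adj v u → γ u ≠ x) :
    Recolorable G L (Pi.single v 1) γ (Function.update γ v x) := by
  refine ⟨[(v, x)], ⟨hx, fun u hu _ ↦ hadj u hu, trivial⟩, rfl, fun u ↦ ?_⟩
  simp [moveCount_cons, Pi.single_apply, eq_comm]

theorem Recolorable.trans (h₁ : Recolorable G L n γ δ) (h₂ : Recolorable G L m δ ε) :
    Recolorable G L (n + m) γ ε := by
  obtain ⟨F, hF, rfl, hn⟩ := h₁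
  obtain ⟨F', hF', rfl, hm⟩ := h₂
  exact ⟨F ++ F', hF.append hF', run_append, moveCount_append.trans_le (add_le_add hn hm)⟩

theorem Recolorable.mono (h : Recolorable G L n γ δ) (hnm : n ≤ m) : Recolorable G L m γ δ :=
  h.imp fun _ ⟨hF, hrun, hn⟩ ↦ ⟨hF, hrun, hn.trans hnm⟩

theorem Recolorable.exists_isRecolSeq (h : Recolorable G L n γ δ) (hγ : IsLColoring G L γ) :
    ∃ (M : ℕ) (ψ : Fin (M + 1) → V → ℕ), IsRecolSeq G L ψ γ δ ∧ ∀ u, recolorCount ψ u ≤ n u := by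
  obtain ⟨F, hF, rfl, hn⟩ := h
  obtain ⟨M, ψ, hψ, hcount⟩ := hF.exists_isRecolSeq hγ
  exact ⟨M, ψ, hψ, fun u ↦ (hcount u).trans (hn u)⟩

section Threats

variable [DecidableRel G.Adj]

/-- The colors which the neighbors of `v` take in `F` after the last move of `v`, in order. -/
def threats (G : SimpleGraph V) [DecidableRel G.Adj] (v : V) : Script V → List ℕ
  | [] => []
  | p :: F => if G.Adj v p.1 ∧ moveCount F v = 0 then p.2 :: threats G v F else threats G v F

theorem threats_cons_of_adj (h : G.Adj v p.1) (hF : moveCount F v = 0) :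
    threats G v (p :: F) = p.2 :: threats G v F :=
  if_pos ⟨h, hF⟩

theorem threats_cons_of_not_adj (h : ¬ G.Adj v p.1) : threats G v (p :: F) = threats G v F :=
  if_neg fun h' ↦ h h'.1

theorem threats_cons_of_moveCount_ne_zero (h : moveCount F v ≠ 0) :
    threats G v (p :: F) = threats G v F :=
  if_neg fun h' ↦ h h'.2

theorem mem_take_threats_cons (h : G.Adj v p.1) (hF : moveCount F v = 0) (hf : f ≠ 0) :
    p.2 ∈ (threats G v (p :: F)).take f := by
  obtain ⟨f, rfl⟩ := Nat.exists_eq_succ_of_ne_zero hf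
  simp [threats_cons_of_adj h hF]

theorem length_threats_cons_le :
    (threats G v (p :: F)).length ≤ (threats G v F).length + if G.Adj v p.1 then 1 else 0 := by
  rw [threats]
  split_ifs <;> simp_all

theorem length_threats_le_sum [G.LocallyFinite] (v : V) (F : Script V) :
    (threats G v F).length ≤ ∑ u ∈ G.neighborFinset v, moveCount F u := by
  induction F with
  | nil => simp [threats]
  | cons p F ih =>
    simp only [moveCount_cons, Finset.sum_add_distrib, Finset.sum_ite_eq,
      SimpleGraph.mem_neighborFinset]
    exact length_threats_cons_le.trans (Nat.add_le_add_right ih _)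

theorem length_threats_add_card_mul_le [G.LocallyFinite] {T : Finset V} {k : ℕ}
    (hT : T ⊆ G.neighborFinset v) (hF : ∀ u, G.Adj v u → u ∉ T → moveCount F u ≤ k) :
    (threats G v F).length + T.card * k ≤ G.degree v * k + ∑ u ∈ T, moveCount F u := by
  have hrest : ∑ u ∈ G.neighborFinset v \ T, moveCount F u ≤ (G.neighborFinset v \ T).card * k :=
    Finset.sum_le_card_nsmul _ _ _ (by simpa using hF)
  have hcard := Finset.card_sdiff_add_card_eq_card hT
  have hsum := Finset.sum_sdiff (f := moveCount F) hT
  have hlen := length_threats_le_sum v F (G := G)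
  rw [SimpleGraph.card_neighborFinset_eq_degree] at hcard
  rw [← hcard, add_mul]
  omega

theorem length_threats_le_of_three_neighbors [G.LocallyFinite] {k m : ℕ} {x y z : V}
    (hdeg : G.degree v ≤ m + 3) (hx : G.Adj v x) (hy : G.Adj v y) (hz : G.Adj v z) (hxy : x ≠ y)
    (hxz : x ≠ z) (hyz : y ≠ z) (hF : ∀ u, u ≠ z → moveCount F u ≤ k) :
    (threats G v F).length ≤ m * k + (moveCount F x + moveCount F y + moveCount F z) := by
  have hT : {x, y, z} ⊆ G.neighborFinset v := by simp [Finset.insert_subset_iff, hx, hy, hz]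
  have hlen := length_threats_add_card_mul_le (F := F) hT fun u _ hu ↦ hF u (by grind)
  have hdeg := Nat.mul_le_mul_right k hdeg
  rw [Finset.card_eq_three.2 ⟨x, y, z, hxy, hxz, hyz, rfl⟩,
    Finset.sum_insert (by simp [hxy, hxz]), Finset.sum_pair hyz] at hlen
  rw [add_mul] at hdeg
  omega

theorem length_threats_le_removeMoves (h : u ≠ v) (F : Script V) :
    (threats G v F).length ≤ (threats G v (removeMoves u F)).length + moveCount F u := by
  induction F with
  | nil => simp [threats]
  | cons p F ih =>
    obtain ⟨q, x⟩ := p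
    rcases eq_or_ne q u with rfl | hq
    · rw [removeMoves_cons_self, moveCount_cons, if_pos rfl]
      have := length_threats_cons_le (G := G) (v := v) (F := F) (p := (q, x))
      split_ifs at this <;> omega
    · rw [removeMoves_cons_of_ne hq, moveCount_cons, if_neg hq, threats, threats,
        moveCount_removeMoves h.symm]
      split_ifs <;> simpa [Nat.succ_add] using ih

end Threats

section Planning

variable [DecidableRel G.Adj] {j k len t w : ℕ}

/-- At most `k` moves of `v` can be inserted into the script `F` so that `v` becomes active and at
most `len` threats to `v` remain after its last move. -/
def Plannable (G : SimpleGraph V) [DecidableRel G.Adj] (L : V → Finset ℕ) (S : Set V) (v : V)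
    (γ : V → ℕ) (F : Script V) (k len : ℕ) : Prop :=
  ∃ F', IsValid G L S γ F' ∧ removeMoves v F' = F ∧ moveCount F' v ≠ 0 ∧ moveCount F' v ≤ k ∧
    (threats G v F').length ≤ len

-- The inserted move does not change the color of `v`: it only fixes how long `v` stays active.
theorem plannable_one (hF : IsValid G L S γ F) (hv : moveCount F v = 0) (hL : γ v ∈ L v)
    (hadj : ∀ u, G.Adj v u → IsActive S F u → γ u ≠ γ v) :
    Plannable G L S v γ F 1 (threats G v F).length := by
  refine ⟨(v, γ v) :: F, ⟨hL, hadj, by rwa [Function.update_eq_self]⟩, ?_, ?_, ?_, ?_⟩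
  · rw [removeMoves_cons_self, removeMoves_eq_self hv]
  · simp [moveCount_cons]
  · simp [moveCount_cons, hv]
  · rw [threats_cons_of_not_adj (p := (v, γ v)) G.irrefl]

theorem Plannable.mono {k' len' : ℕ} (h : Plannable G L S v γ F k len) (hk : k ≤ k')
    (hlen : len ≤ len') : Plannable G L S v γ F k' len' := by
  obtain ⟨F', hF', hrem, hne, hcount, hthreats⟩ := h
  exact ⟨F', hF', hrem, hne, hcount.trans hk, hthreats.trans hlen⟩

theorem Plannable.of_update (hF : Plannable G L S v (Function.update γ v x) F k len) (hx : x ∈ L v)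
    (hadj : ∀ u, G.Adj v u → IsActive S F u → γ u ≠ x) :
    Plannable G L S v γ F (k + 1) len := by
  obtain ⟨F', hF', rfl, -, hcount, hlen⟩ := hF
  refine ⟨(v, x) :: F', ⟨hx, fun u hu hact ↦ ?_, hF'⟩, removeMoves_cons_self x, ?_, ?_, ?_⟩
  · exact hadj u hu ((isActive_removeMoves hu.ne').2 hact)
  · simp [moveCount_cons]
  · simpa [moveCount_cons] using hcount
  · rwa [threats_cons_of_not_adj (p := (v, x)) G.irrefl]

theorem Plannable.cons (hF : Plannable G L S v (Function.update γ p.1 p.2) F k len)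
    (hp : IsValid G L S γ (p :: F)) (hpv : p.1 ≠ v) (hvp : G.Adj v p.1 → γ v ≠ p.2) :
    Plannable G L S v γ (p :: F) k len := by
  obtain ⟨F', hF', rfl, hne, hcount, hlen⟩ := hF
  refine ⟨p :: F', ⟨hp.1, fun u hu hact ↦ ?_, hF'⟩, removeMoves_cons_of_ne hpv, ?_, ?_, ?_⟩
  · rcases eq_or_ne u v with rfl | huv
    · exact hvp hu.symm
    · exact hp.2.1 u hu ((isActive_removeMoves huv).2 hact)
  · simpa [moveCount_cons, hpv] using hne
  · simpa [moveCount_cons, hpv] using hcount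
  · rwa [threats_cons_of_moveCount_ne_zero hne]

-- Each of the `j` inserted moves avoids the next `w` threats.
theorem plannable_of_notMem_take {N : Finset V} (hw : 0 < w) (hN : N.card + w < (L v).card)
    (hvS : v ∈ S) (hF : IsValid G L S γ F) (hv : moveCount F v = 0)
    (hFN : ∀ u, G.Adj v u → IsActive S F u → u ∈ N) (hL : γ v ∈ L v)
    (hadj : ∀ u, G.Adj v u → IsActive S F u → γ u ≠ γ v) (ht : γ v ∉ (threats G v F).take t) :
    Plannable G L S v γ F (j + 1) ((threats G v F).length - (w * j + t)) := by
  induction F generalizing γ j t with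
  | nil => exact (plannable_one hF hv hL hadj).mono (by omega) (by simp [threats])
  | cons p F ih =>
    wlog ht₀ : t ≠ 0 generalizing γ j t
    · obtain rfl := not_ne_iff.1 ht₀
      rcases j with - | j
      · exact plannable_one hF hv hL hadj
      obtain ⟨x, hxL, hxN, hx⟩ := exists_mem_avoiding (L v) γ N ((threats G v (p :: F)).take w)
        (by grind [List.length_take_le])
      refine ((this (j := j) (t := w) (hF.update hvS hv (x := x)) ?_ (fun u hu hact ↦ ?_) ?_
        hw.ne').of_update hxL fun u hu hact ↦ hxN u (hFN u hu hact)).mono le_rfl ?_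
      · simpa using hxL
      · simpa [hu.ne'] using hxN u (hFN u hu hact)
      · simpa using hx
      · rw [mul_add_one, add_zero]
    obtain ⟨hpv, hv'⟩ := moveCount_cons_eq_zero.1 hv
    have hγv : Function.update γ p.1 p.2 v = γ v := Function.update_of_ne hpv.symm _ _
    have hstep (hp : G.Adj v p.1 → γ v ≠ p.2) (t : ℕ) (ht : γ v ∉ (threats G v F).take t) :
        Plannable G L S v γ (p :: F) (j + 1) ((threats G v F).length - (w * j + t)) := by
      refine (ih hF.2.2 hv' (fun u hu hact ↦ hFN u hu hact.cons) (hγv ▸ hL) (fun u hu hact ↦ ?_)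
        (hγv ▸ ht)).cons hF hpv hp
      rw [hγv, Function.update_apply]
      split_ifs with hup
      · exact (hp (hup ▸ hu)).symm
      · exact hadj u hu hact.cons
    by_cases hp : G.Adj v p.1
    · obtain ⟨t, rfl⟩ := Nat.exists_eq_succ_of_ne_zero ht₀
      rw [threats_cons_of_adj hp hv', List.take_succ_cons, List.mem_cons, not_or] at ht
      refine (hstep (fun _ ↦ ht.1) t ht.2).mono le_rfl ?_
      rw [threats_cons_of_adj hp hv', List.length_cons]
      omega
    · rw [threats_cons_of_not_adj hp] at ht ⊢
      exact hstep (absurd · hp) t ht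

theorem plannable_of_forall_not_isActive [G.LocallyFinite] {T : Finset V} (hw : 0 < w)
    (hvS : v ∈ S) (hT : T ⊆ G.neighborFinset v) (hTF : ∀ u ∈ T, ¬ IsActive S F u)
    (hdeg : G.degree v + w < (L v).card + T.card) (hγ : IsLColoring G L γ)
    (hF : IsValid G L S γ F) (hv : moveCount F v = 0) (j : ℕ) :
    Plannable G L S v γ F (j + 1) ((threats G v F).length - w * j) := by
  refine plannable_of_notMem_take (N := G.neighborFinset v \ T) (t := 0) hw ?_ hvS hF hv
    (fun u hu hact ↦ ?_) (hγ.1 v) (fun u hu _ ↦ (hγ.2 hu).symm) (by simp)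
  · have := Finset.card_sdiff_add_card_eq_card hT
    rw [SimpleGraph.card_neighborFinset_eq_degree] at this
    omega
  · simpa [hu] using fun huT ↦ hTF u huT hact

end Planning

section Backed

variable [G.LocallyFinite] {a : V}

/-- Every unit of `σ u` for a vertex `u ≠ a` is backed by the helper `a`, which is adjacent to `u`
and has a unit in `σ a` to spare for it. -/
structure Backed (G : SimpleGraph V) [G.LocallyFinite] (a : V) (σ : V → ℕ) : Prop where
  adj : ∀ ⦃u⦄, u ≠ a → σ u ≠ 0 → G.Adj a u
  sum_le : ∑ u ∈ G.neighborFinset a, σ u ≤ σ a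

theorem Backed.of_add (h : Backed G a (n + (Pi.single v 1 + σ))) (hv : G.Adj a v)
    (hn : n ≤ Pi.single a 1) : Backed G a σ where
  adj u hu hσu := h.adj hu (by simp [hσu])
  sum_le := by
    have hsum := h.sum_le
    have hna : n a ≤ 1 := by simpa using hn a
    simp only [Pi.add_apply, Finset.sum_add_distrib, Finset.sum_pi_single',
      SimpleGraph.mem_neighborFinset, hv, if_true, Pi.single_eq_of_ne hv.ne, zero_add] at hsum
    omega

omit [DecidableEq V] in
theorem Backed.helper_ne_zero (h : Backed G a σ) (hva : v ≠ a) (hv : σ v ≠ 0) : σ a ≠ 0 := by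
  have := Finset.single_le_sum (f := σ) (fun _ _ ↦ Nat.zero_le _)
    ((SimpleGraph.mem_neighborFinset ..).2 (h.adj hva hv))
  have := h.sum_le
  omega

end Backed

section Online

variable [DecidableRel G.Adj] {a : V} {w r' σ' : V → ℕ} {c : ℕ}

/-- The vertex `v` of color `c` can escape all its threats in `F` with `r` recolorings of its own
and `s` recolorings in which the helper `a` takes part. The next `f` threats are harmless already,
a new color of `v` avoids the next `w v` of them, and `w v + 1` if `a` makes way. For the helper
itself, `s` counts the requests to make way: after such a request it only avoids the next `w a - 1`
threats. -/
def Solvent (G : SimpleGraph V) [DecidableRel G.Adj] (a : V) (w : V → ℕ) (F : Script V) (v : V)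
    (c r s : ℕ) : Prop :=
  ∃ f, (f = 0 ∨ moveCount F v = 0 ∧ c ∉ (threats G v F).take f) ∧
    if v = a then f ≤ w v ∧ (threats G v F).length + s ≤ w v * r + f
    else (threats G v F).length ≤ w v * r + (w v + 1) * s + f

/-- The state `γ` is an `L`-coloring from which `F` can be executed if every vertex `v` of `S` may
be recolored `r v + σ v` additional times in order to make way. -/
structure Invariant (G : SimpleGraph V) [DecidableRel G.Adj] [G.LocallyFinite] (L : V → Finset ℕ)
    (S : Set V) (a : V) (w γ : V → ℕ) (F : Script V) (r σ : V → ℕ) : Prop where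
  isLColoring : IsLColoring G L γ
  isValid : IsValid G L S γ F
  helper_mem : a ∈ S
  moveCount_helper : moveCount F a = 0
  pos : ∀ v ∈ S, 0 < w v
  degree_add_lt : ∀ v ∈ S, G.degree v + w v < (L v).card
  solvent : ∀ v ∈ S, Solvent G a w F v (γ v) (r v) (σ v)

theorem Solvent.of_cons {r s : ℕ} (h : Solvent G a w (p :: F) v (γ v) r s) :
    Solvent G a w F v (Function.update γ p.1 p.2 v) r s := by
  obtain ⟨f, hf, hlen⟩ := h
  have hle := length_threats_cons_le (G := G) (v := v) (p := p) (F := F)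
  have hge : (threats G v F).length ≤ (threats G v (p :: F)).length := by
    rw [threats]; split_ifs <;> simp
  rcases hf with rfl | ⟨hF, hf⟩
  · refine ⟨0, .inl rfl, ?_⟩
    split_ifs at hlen ⊢ <;> omega
  obtain ⟨hpv, hF'⟩ := moveCount_cons_eq_zero.1 hF
  rw [Function.update_of_ne hpv.symm]
  by_cases hp : G.Adj v p.1
  · rw [threats_cons_of_adj hp hF'] at hf hlen
    rcases f with - | f
    · refine ⟨0, .inl rfl, ?_⟩
      rw [List.length_cons] at hlen
      split_ifs at hlen ⊢ <;> omega
    · refine ⟨f, .inr ⟨hF', fun h ↦ hf ?_⟩, ?_⟩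
      · exact List.mem_cons_of_mem _ h
      · rw [List.length_cons] at hlen
        split_ifs at hlen ⊢ <;> omega
  · rw [threats_cons_of_not_adj hp] at hf hlen
    exact ⟨f, .inr ⟨hF', hf⟩, hlen⟩

theorem Solvent.of_threatened {r s : ℕ} (h : Solvent G a w (p :: F) v p.2 r s)
    (hp : G.Adj v p.1) (hF : moveCount F v = 0) :
    if v = a then (threats G v (p :: F)).length + s ≤ w v * r
    else (threats G v (p :: F)).length ≤ w v * r + (w v + 1) * s := by
  obtain ⟨f, hf, hlen⟩ := h
  obtain rfl : f = 0 := of_not_not fun hf₀ ↦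
    (hf.resolve_left hf₀).2 (mem_take_threats_cons hp hF hf₀)
  simpa using hlen

theorem Solvent.ne_zero {r s : ℕ} (h : Solvent G a w (p :: F) v p.2 r s)
    (hp : G.Adj v p.1) (hF : moveCount F v = 0) (hs : v = a ∨ s = 0) : r ≠ 0 := by
  rintro rfl
  have := h.of_threatened hp hF
  rw [threats_cons_of_adj hp hF, List.length_cons] at this
  split_ifs at this with hva
  · omega
  · simp [hs.resolve_left hva] at this

theorem Solvent.dodge {r s : ℕ} (h : Solvent G a w (p :: F) v p.2 (1 + r) s)
    (hp : G.Adj v p.1) (hF : moveCount (p :: F) v = 0)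
    (hx : x ∉ (threats G v (p :: F)).take (w v)) : Solvent G a w (p :: F) v x r s := by
  have hlen := h.of_threatened hp (moveCount_cons_eq_zero.1 hF).2
  refine ⟨w v, .inr ⟨hF, hx⟩, ?_⟩
  split_ifs at hlen ⊢ <;> grind

theorem Solvent.dodge_with_help {r s : ℕ} (h : Solvent G a w (p :: F) v p.2 r (1 + s))
    (hp : G.Adj v p.1) (hF : moveCount (p :: F) v = 0) (hva : v ≠ a)
    (hx : x ∉ (threats G v (p :: F)).take (w v + 1)) : Solvent G a w (p :: F) v x r s := by
  have hlen := h.of_threatened hp (moveCount_cons_eq_zero.1 hF).2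
  refine ⟨w v + 1, .inr ⟨hF, hx⟩, ?_⟩
  rw [if_neg hva] at hlen ⊢
  grind

theorem Solvent.make_way {r s : ℕ} (h : Solvent G a w F a c r (1 + s)) (hF : moveCount F a = 0)
    (hw : 0 < w a) (hx : x ∉ (threats G a F).take (w a - 1)) : Solvent G a w F a x r s := by
  obtain ⟨f, -, hlen⟩ := h
  refine ⟨w a - 1, .inr ⟨hF, hx⟩, ?_⟩
  rw [if_pos rfl] at hlen ⊢
  omega

theorem exists_eq_single_add (h : r v ≠ 0) : ∃ r' : V → ℕ, r = Pi.single v 1 + r' := by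
  refine exists_add_of_le fun u ↦ ?_
  rw [Pi.single_apply]
  split_ifs with hu
  · exact hu ▸ Nat.one_le_iff_ne_zero.2 h
  · exact Nat.zero_le _

variable [G.LocallyFinite]

theorem Invariant.recolor (h : Invariant G L S a w γ F r σ) (hv : v ∈ S)
    (hF : moveCount F v = 0) (hx : x ∈ L v) (hadj : ∀ u, G.Adj v u → γ u ≠ x)
    (hsolvent : Solvent G a w F v x (r' v) (σ' v)) (hr : ∀ u, u ≠ v → r' u = r u)
    (hσ : ∀ u, u ≠ v → σ' u = σ u) : Invariant G L S a w (Function.update γ v x) F r' σ' where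
  __ := h
  isLColoring := h.isLColoring.update hx hadj
  isValid := h.isValid.update hv hF
  solvent u hu := by
    rcases eq_or_ne u v with rfl | huv
    · simpa using hsolvent
    · simpa [huv, hr u huv, hσ u huv] using h.solvent u hu

theorem Invariant.dodge (h : Invariant G L S a w γ (p :: F) r σ) (hv : v ∈ S)
    (hF : moveCount (p :: F) v = 0) (hp : G.Adj v p.1) (hvp : γ v = p.2) (hσ : v = a ∨ σ v = 0) :
    ∃ r' x, r = Pi.single v 1 + r' ∧ x ≠ p.2 ∧
      Recolorable G L (Pi.single v 1) γ (Function.update γ v x) ∧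
      Invariant G L S a w (Function.update γ v x) (p :: F) r' σ := by
  have hF' : moveCount F v = 0 := (moveCount_cons_eq_zero.1 hF).2
  have hsolvent := hvp ▸ h.solvent v hv
  obtain ⟨r', rfl⟩ := exists_eq_single_add (hsolvent.ne_zero hp hF' hσ)
  obtain ⟨x, hxL, hadj, hx⟩ := exists_color_avoiding G γ ((threats G v (p :: F)).take (w v))
    ((Nat.add_le_add_left (List.length_take_le ..) _).trans_lt (h.degree_add_lt v hv))
  refine ⟨r', x, rfl, ?_, .single hxL hadj, h.recolor hv hF hxL hadj ?_ (fun u hu ↦ ?_)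
    fun _ _ ↦ rfl⟩
  · rintro rfl
    exact hx (mem_take_threats_cons hp hF' (h.pos v hv).ne')
  · exact Solvent.dodge (by simpa using hsolvent) hp hF hx
  · simp [hu]

theorem Invariant.make_way (h : Invariant G L S a w γ F r σ) (hσ : σ a ≠ 0) (y : ℕ) :
    ∃ σ' n γ', σ = n + σ' ∧ n ≤ Pi.single a 1 ∧ Recolorable G L n γ γ' ∧
      Invariant G L S a w γ' F r σ' ∧ (∀ u, u ≠ a → γ' u = γ u) ∧ γ' a ≠ y := by
  by_cases hy : γ a = y
  swap
  · exact ⟨σ, 0, γ, (zero_add σ).symm, zero_le, .refl γ, h, fun _ _ ↦ rfl, hy⟩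
  obtain ⟨σ', rfl⟩ := exists_eq_single_add hσ
  have hpos := h.pos a h.helper_mem
  obtain ⟨x, hxL, hadj, hx⟩ :=
    exists_color_avoiding G γ (L := L) (v := a) (y :: (threats G a F).take (w a - 1)) (by
      have := h.degree_add_lt a h.helper_mem
      grind [List.length_take_le])
  simp only [List.mem_cons, not_or] at hx
  refine ⟨σ', _, _, rfl, le_rfl, .single hxL hadj,
    h.recolor h.helper_mem h.moveCount_helper hxL hadj ?_ (fun _ _ ↦ rfl) (fun u hu ↦ by simp [hu]),
    fun u hu ↦ by simp [hu], by simpa using hx.1⟩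
  exact Solvent.make_way (by simpa using h.solvent a h.helper_mem) h.moveCount_helper hpos hx.2

theorem Invariant.dodge_with_help (h : Invariant G L S a w γ (p :: F) r σ) (hσ : Backed G a σ)
    (hv : v ∈ S) (hF : moveCount (p :: F) v = 0) (hp : G.Adj v p.1) (hvp : γ v = p.2)
    (hva : v ≠ a) (hσv : σ v ≠ 0) :
    ∃ σ' n γ', σ = n + σ' ∧ Backed G a σ' ∧ Recolorable G L n γ γ' ∧
      Invariant G L S a w γ' (p :: F) r σ' ∧ (∀ u, u ≠ v → u ≠ a → γ' u = γ u) ∧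
      γ' v ≠ p.2 ∧ γ' a ≠ p.2 := by
  have hav := hσ.adj hva hσv
  have hF' : moveCount F v = 0 := (moveCount_cons_eq_zero.1 hF).2
  obtain ⟨x, hxL, hadj, hx⟩ := exists_mem_avoiding (L v) γ (G.neighborFinset v \ {a})
    ((threats G v (p :: F)).take (w v + 1)) (by
      have := h.degree_add_lt v hv
      have := Finset.card_sdiff_add_card_eq_card
        (Finset.singleton_subset_iff.2 ((G.mem_neighborFinset v a).2 hav.symm))
      rw [SimpleGraph.card_neighborFinset_eq_degree, Finset.card_singleton] at this
      grind [List.length_take_le])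
  obtain ⟨σ₁, n, γ₁, rfl, hn, hrec, hinv, hγ₁, hγ₁a⟩ :=
    h.make_way (hσ.helper_ne_zero hva hσv) x
  have hnv : n v = 0 := by simpa [hva] using hn v
  obtain ⟨σ₂, rfl⟩ := exists_eq_single_add (r := σ₁) (v := v) (by simpa [hnv] using hσv)
  have hadj₁ (u : V) (hu : G.Adj v u) : γ₁ u ≠ x := by
    rcases eq_or_ne u a with rfl | hua
    · exact hγ₁a
    · exact hγ₁ u hua ▸ hadj u (by simp [hu, hua])
  refine ⟨σ₂, n + Pi.single v 1, Function.update γ₁ v x, (add_assoc ..).symm,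
    hσ.of_add hav hn, hrec.trans (.single hxL hadj₁), ?_, ?_, ?_, ?_⟩
  · refine hinv.recolor hv hF hxL hadj₁ ?_ (fun _ _ ↦ rfl) fun u hu ↦ by simp [hu]
    refine Solvent.dodge_with_help ?_ hp hF hva hx
    simpa [hγ₁ v hva, hvp] using hinv.solvent v hv
  · intro u huv hua
    simp [huv, hγ₁ u hua]
  · rw [Function.update_self]
    rintro rfl
    exact hx (mem_take_threats_cons hp hF' (Nat.succ_ne_zero _))
  · rw [Function.update_of_ne hva.symm, ← hvp, ← hγ₁ v hva]
    exact hinv.isLColoring.2 hav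

theorem Invariant.escape (h : Invariant G L S a w γ (p :: F) r σ) (hσ : Backed G a σ)
    (hv : v ∈ S) (hF : moveCount (p :: F) v = 0) (hp : G.Adj v p.1) (hvp : γ v = p.2) :
    ∃ r' σ' n γ', r + σ = n + (r' + σ') ∧ Backed G a σ' ∧ Recolorable G L n γ γ' ∧
      Invariant G L S a w γ' (p :: F) r' σ' ∧ (∀ u, u ∉ S → γ' u = γ u) ∧ γ' v ≠ p.2 ∧
      ∀ u, γ u ≠ p.2 → γ' u ≠ p.2 := by
  by_cases hσv : v = a ∨ σ v = 0
  · obtain ⟨r', x, rfl, hx, hrec, hinv⟩ := h.dodge hv hF hp hvp hσv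
    refine ⟨r', σ, _, _, add_assoc .., hσ, hrec, hinv, fun u hu ↦ ?_, by simpa, fun u hu ↦ ?_⟩
    · exact Function.update_of_ne (ne_of_mem_of_not_mem hv hu).symm _ _
    · rw [Function.update_apply]
      split_ifs
      exacts [hx, hu]
  · obtain ⟨hva, hσv⟩ := not_or.1 hσv
    obtain ⟨σ', n, γ', rfl, hσ', hrec, hinv, hγ', hv', ha'⟩ :=
      h.dodge_with_help hσ hv hF hp hvp hva hσv
    refine ⟨r, σ', n, γ', add_left_comm .., hσ', hrec, hinv, fun u hu ↦ ?_, hv', fun u hu ↦ ?_⟩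
    · exact hγ' u (ne_of_mem_of_not_mem hv hu).symm (ne_of_mem_of_not_mem h.helper_mem hu).symm
    · by_cases huv : u = v
      · exact huv ▸ hv'
      by_cases hua : u = a
      · exact hua ▸ ha'
      exact hγ' u huv hua ▸ hu

theorem Invariant.clear_neighbors (h : Invariant G L S a w γ (p :: F) r σ) (hσ : Backed G a σ) :
    ∃ r' σ' n γ', r + σ = n + (r' + σ') ∧ Backed G a σ' ∧ Recolorable G L n γ γ' ∧
      Invariant G L S a w γ' (p :: F) r' σ' ∧ (∀ u, u ∉ S → γ' u = γ u) ∧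
      ∀ u, G.Adj p.1 u → γ' u ≠ p.2 := by
  induction hN : ((G.neighborFinset p.1).filter (γ · = p.2)).card using Nat.strong_induction_on
    generalizing γ r σ with
  | _ N ih =>
    by_cases hfree : ∀ u, G.Adj p.1 u → γ u ≠ p.2
    · exact ⟨r, σ, 0, γ, (zero_add _).symm, hσ, .refl γ, h, fun _ _ ↦ rfl, hfree⟩
    push Not at hfree
    obtain ⟨v, hpv, hv⟩ := hfree
    obtain ⟨hvS, hF⟩ := not_isActive.1 fun hact ↦ h.isValid.2.1 v hpv hact hv
    obtain ⟨r₁, σ₁, n₁, γ₁, hsum₁, hσ₁, hrec₁, hinv₁, hγ₁, hv₁, hp₁⟩ :=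
      h.escape hσ hvS (moveCount_cons_eq_zero.2 ⟨hpv.ne, hF⟩) hpv.symm hv
    have hlt : ((G.neighborFinset p.1).filter (γ₁ · = p.2)).card < N := by
      refine hN ▸ Finset.card_lt_card (Finset.ssubset_iff_subset_ne.2 ⟨?_, fun heq ↦ ?_⟩)
      · exact Finset.monotone_filter_right _ fun u _ ↦ not_imp_not.1 (hp₁ u)
      · have : v ∈ (G.neighborFinset p.1).filter (γ₁ · = p.2) := by simp [heq, hpv, hv]
        exact hv₁ (Finset.mem_filter.1 this).2
    obtain ⟨r₂, σ₂, n₂, γ₂, hsum₂, hσ₂, hrec₂, hinv₂, hγ₂, hp₂⟩ := ih _ hlt hinv₁ hσ₁ rfl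
    refine ⟨r₂, σ₂, n₁ + n₂, γ₂, ?_, hσ₂, hrec₁.trans hrec₂, hinv₂, fun u hu ↦ ?_, hp₂⟩
    · rw [hsum₁, hsum₂, add_assoc]
    · rw [hγ₂ u hu, hγ₁ u hu]

theorem Invariant.move (h : Invariant G L S a w γ (p :: F) r σ)
    (hp : ∀ u, G.Adj p.1 u → γ u ≠ p.2) :
    Invariant G L S a w (Function.update γ p.1 p.2) F r σ where
  __ := h
  isLColoring := h.isLColoring.update h.isValid.1 hp
  isValid := h.isValid.2.2
  moveCount_helper := (moveCount_cons_eq_zero.1 h.moveCount_helper).2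
  solvent u hu := (h.solvent u hu).of_cons

theorem Invariant.exists_recolorable (h : Invariant G L S a w γ F r σ) (hσ : Backed G a σ) :
    ∃ γ', Recolorable G L (moveCount F + (r + σ)) γ γ' ∧ ∀ u, u ∉ S → γ' u = run γ F u := by
  induction F generalizing γ r σ with
  | nil => exact ⟨γ, (Recolorable.refl γ).mono zero_le, fun _ _ ↦ rfl⟩
  | cons p F ih =>
    obtain ⟨r₁, σ₁, n, γ₁, hsum, hσ₁, hrec₁, hinv₁, hγ₁, hp⟩ := h.clear_neighbors hσ
    obtain ⟨γ₂, hrec₂, hγ₂⟩ := ih (hinv₁.move hp) hσ₁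
    refine ⟨γ₂, ((hrec₁.trans (.single hinv₁.isValid.1 hp)).trans hrec₂).mono fun u ↦ ?_,
      fun u hu ↦ (hγ₂ u hu).trans (run_apply_congr F ?_)⟩
    · simp only [hsum, Pi.add_apply, moveCount_cons, Pi.single_apply, eq_comm (a := u)]
      omega
    · simp [Function.update_apply, hγ₁ u hu]

end Online

section Finish

variable {β : V → ℕ} {B : List ℕ} {l : List V} {s : ℕ}

theorem single_add_count (v : V) (l : List V) :
    (Pi.single v 1 + (l.count ·) : V → ℕ) = ((v :: l).count ·) := by
  funext u
  simp only [Pi.add_apply, Pi.single_apply, List.count_cons, beq_iff_eq, eq_comm (a := u)]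
  omega

theorem exists_recolorable_pairwise_ne [G.LocallyFinite] (β : V → ℕ) (hl : l.Nodup)
    (hdeg : ∀ p ∈ l.zipIdx s, G.degree p.1 + p.2 < (L p.1).card) (hB : B.length ≤ s) (γ : V → ℕ) :
    ∃ γ', Recolorable G L (l.count ·) γ γ' ∧ (∀ u, u ∉ l → γ' u = γ u) ∧ (∀ v ∈ l, γ' v ∉ B) ∧
      l.Pairwise fun u v ↦ γ' v ≠ β u := by
  induction l generalizing γ B s with
  | nil => exact ⟨γ, .refl γ, by simp⟩
  | cons v l ih =>
    simp only [List.zipIdx_cons, List.forall_mem_cons, List.nodup_cons] at hdeg hl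
    obtain ⟨x, hxL, hadj, hx⟩ := exists_color_avoiding G γ B (by grind : _ < (L v).card)
    obtain ⟨γ', hrec, hoff, havoid, hpair⟩ :=
      ih (B := β v :: B) hl.2 hdeg.2 (by simpa) (Function.update γ v x)
    simp only [List.mem_cons, not_or] at havoid
    refine ⟨γ', single_add_count v l ▸ (Recolorable.single hxL hadj).trans hrec, fun u hu ↦ ?_,
      List.forall_mem_cons.2 ⟨?_, fun u hu ↦ (havoid u hu).2⟩,
      List.pairwise_cons.2 ⟨fun u hu ↦ (havoid u hu).1, hpair⟩⟩
    · rw [List.mem_cons, not_or] at hu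
      rw [hoff u hu.2, Function.update_of_ne hu.1]
    · rwa [hoff v hl.1, Function.update_self]

theorem recolorable_of_pairwise_ne (hβ : IsLColoring G L β) (hl : l.Nodup)
    (hγ : ∀ u, u ∉ l → γ u = β u) (hpair : l.Pairwise fun u v ↦ γ v ≠ β u) :
    Recolorable G L (l.count ·) γ β := by
  induction l generalizing γ with
  | nil => exact funext (hγ · List.not_mem_nil) ▸ .refl γ
  | cons v l ih =>
    rw [List.nodup_cons] at hl
    rw [List.pairwise_cons] at hpair
    have hadj (u : V) (hu : G.Adj v u) : γ u ≠ β v := by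
      by_cases hul : u ∈ l
      · exact hpair.1 u hul
      · exact hγ u (by simp [hu.ne', hul]) ▸ (hβ.2 hu).symm
    refine single_add_count v l ▸
      (Recolorable.single (hβ.1 v) hadj).trans (ih hl.2 (fun u hu ↦ ?_) ?_)
    · grind
    · refine hpair.2.imp_of_mem fun _ hw h ↦ ?_
      rwa [Function.update_of_ne (ne_of_mem_of_not_mem hw hl.1)]

theorem recolorable_of_eq_off [G.LocallyFinite] (hβ : IsLColoring G L β) (hl : l.Nodup)
    (hdeg : ∀ p ∈ l.zipIdx, G.degree p.1 + p.2 < (L p.1).card) (hγ : ∀ u, u ∉ l → γ u = β u) :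
    Recolorable G L (fun v ↦ 2 * l.count v) γ β := by
  obtain ⟨γ', hrec, hoff, -, hpair⟩ :=
    exists_recolorable_pairwise_ne β hl hdeg (B := []) le_rfl γ
  have hfinish := recolorable_of_pairwise_ne hβ hl (fun u hu ↦ (hoff u hu).trans (hγ u hu)) hpair
  exact (hrec.trans hfinish).mono fun u ↦ (two_mul _).ge

end Finish

end Script

/-- Two triangles `abc` and `bcd` with a common edge and an edge `de` attached to `d`, where `a` and
`e` have degree at most `5` and the other vertices have degree at most `6`. Further edges between
these five vertices are allowed. -/
structure IsReducibleConfig {V : Type} (G : SimpleGraph V) [G.LocallyFinite] (a b c d e : V) :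
    Prop where
  nodup : [a, b, c, d, e].Nodup
  adj_ab : G.Adj a b
  adj_bc : G.Adj b c
  adj_cd : G.Adj c d
  adj_de : G.Adj d e
  adj_ac : G.Adj a c
  adj_bd : G.Adj b d
  degree_a : G.degree a ≤ 5
  degree_b : G.degree b ≤ 6
  degree_c : G.degree c ≤ 6
  degree_d : G.degree d ≤ 6
  degree_e : G.degree e ≤ 5

namespace IsReducibleConfig

open Script

variable {V : Type} [DecidableEq V] {G : SimpleGraph V} [DecidableRel G.Adj] [G.LocallyFinite]
  {L : V → Finset ℕ} {a b c d e : V} {α β : V → ℕ} {F : Script V} {k : ℕ}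

theorem plannable_e (h : IsReducibleConfig G a b c d e) (hL : ∀ u, 10 ≤ (L u).card)
    (hα : IsLColoring G L α) (hF : IsValid G L {a, b, c, d, e} α F)
    (hS : ∀ u ∈ ({a, b, c, d, e} : Set V), moveCount F u = 0) (hk : ∀ u, moveCount F u ≤ k) :
    Plannable G L {a, b, c, d, e} e α F 37 (4 * k - 5 * 36) := by
  have hd : d ∈ ({a, b, c, d, e} : Set V) := by simp
  have he : e ∈ ({a, b, c, d, e} : Set V) := by simp
  have hT : {d} ⊆ G.neighborFinset e := by simp [h.adj_de.symm]
  have hlen := length_threats_add_card_mul_le hT fun u _ _ ↦ hk u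
  have hdeg := h.degree_e
  have hplan := plannable_of_forall_not_isActive (w := 5) (by simp) he hT
    (by simpa using not_isActive.2 ⟨hd, hS d hd⟩) (by grind [hL e]) hα hF (hS e he) 36
  refine hplan.mono le_rfl ?_
  have := Nat.mul_le_mul_right k hdeg
  simp only [Finset.card_singleton, Finset.sum_singleton, hS d hd] at hlen
  omega

theorem plannable_d (h : IsReducibleConfig G a b c d e) (hL : ∀ u, 10 ≤ (L u).card)
    (hα : IsLColoring G L α) (hF : IsValid G L {a, b, c, d, e} α F)
    (hS : ∀ u ∈ ({a, b, c, d, e} : Set V), u ≠ e → moveCount F u = 0)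
    (he : moveCount F e ≤ 37) (hk : ∀ u, u ≠ e → moveCount F u ≤ k) :
    Plannable G L {a, b, c, d, e} d α F 24 (3 * k + 37 - 5 * 23) := by
  have hnodup := h.nodup
  simp only [List.nodup_cons, List.mem_cons, not_or] at hnodup
  have hb : moveCount F b = 0 := hS b (by simp) (by tauto)
  have hc : moveCount F c = 0 := hS c (by simp) (by tauto)
  have hlen := length_threats_le_of_three_neighbors h.degree_d h.adj_bd.symm h.adj_cd.symm h.adj_de
    h.adj_bc.ne (by tauto) (by tauto) hk
  have hplan := plannable_of_forall_not_isActive (T := {b, c}) (w := 5) (v := d) (by simp) (by simp)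
    (by simp [Finset.insert_subset_iff, h.adj_bd.symm, h.adj_cd.symm])
    (by simp [not_isActive, hb, hc])
    (by rw [Finset.card_pair h.adj_bc.ne]; linarith [hL d, h.degree_d]) hα hF
    (hS d (by simp) (by tauto)) 23
  exact hplan.mono le_rfl (by omega)

/-- A script to be executed from `α` in which `a`, `b` and `c` have no moves, and in which `d` and
`e` have few moves of their own which avoid many of the at most `k` moves of every other neighbor:
`23` of them avoid `5` threats to `d` each, `36` of them avoid `5` threats to `e` each, and one more
move of each of them fixes when it becomes inactive. -/
structure IsPlan (G : SimpleGraph V) [DecidableRel G.Adj] (L : V → Finset ℕ) (k : ℕ)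
    (a b c d e : V) (α : V → ℕ) (F : Script V) : Prop where
  isValid : IsValid G L {a, b, c, d, e} α F
  moveCount_le : ∀ u, moveCount F u ≤ k
  moveCount_a : moveCount F a = 0
  moveCount_b : moveCount F b = 0
  moveCount_c : moveCount F c = 0
  moveCount_d : moveCount F d ≤ 24
  moveCount_e : moveCount F e ≤ 37
  length_threats_d : (threats G d F).length ≤ 3 * k + 37 - 5 * 23
  length_threats_e : (threats G e F).length ≤ 4 * k - 5 * 36 + 24

theorem exists_isPlan (h : IsReducibleConfig G a b c d e) (hk : 37 ≤ k)
    (hL : ∀ u, 10 ≤ (L u).card) (hα : IsLColoring G L α) (hF : IsValid G L {a, b, c, d, e} α F)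
    (hS : ∀ u ∈ ({a, b, c, d, e} : Set V), moveCount F u = 0) (hcount : ∀ u, moveCount F u ≤ k) :
    ∃ F', IsPlan G L k a b c d e α F' ∧
      ∀ u ∉ ({a, b, c, d, e} : Set V), run α F' u = run α F u := by
  have hnodup := h.nodup
  obtain ⟨Fe, hFe, rfl, -, hcount_e, hlen_e⟩ := h.plannable_e hL hα hF hS hcount
  obtain ⟨Fd, hFd, rfl, -, hcount_d, hlen_d⟩ := h.plannable_d hL hα hFe
    (fun u hu hue ↦ (moveCount_removeMoves hue).symm.trans (hS u hu)) hcount_e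
    fun u hue ↦ (moveCount_removeMoves hue).symm.trans_le (hcount u)
  have hcount_e : moveCount Fd e ≤ 37 :=
    (moveCount_removeMoves h.adj_de.ne.symm).symm.trans_le hcount_e
  have hcount_off (u : V) (hud : u ≠ d) (hue : u ≠ e) :
      moveCount (removeMoves e (removeMoves d Fd)) u = moveCount Fd u := by
    rw [moveCount_removeMoves hue, moveCount_removeMoves hud]
  have hzero (u : V) (hu : u ∈ [a, b, c]) : moveCount Fd u = 0 :=
    (hcount_off u (by grind) (by grind)).symm.trans (hS u (by grind))
  refine ⟨Fd, ⟨hFd, fun u ↦ ?_, hzero a (by simp), hzero b (by simp), hzero c (by simp), hcount_d,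
    hcount_e, hlen_d, ?_⟩, fun u hu ↦ ?_⟩
  · rcases eq_or_ne u d with rfl | hud
    · omega
    rcases eq_or_ne u e with rfl | hue
    · omega
    exact (hcount_off u hud hue).symm.trans_le (hcount u)
  · have := length_threats_le_removeMoves h.adj_de.ne Fd (G := G)
    omega
  · simp only [Set.mem_insert_iff, Set.mem_singleton_iff, not_or] at hu
    rw [run_removeMoves _ _ hu.2.2.2.2, run_removeMoves _ _ hu.2.2.2.1]

/-- The numbers of threats which a recoloring of a vertex of the configuration without help can
avoid. -/
def width (a e : V) : V → ℕ := fun v ↦ if v = a ∨ v = e then 4 else 3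

/-- The numbers of recolorings without help in the execution of a planned script. They are what
remains of `k` after `2` final recolorings of every vertex, `60` requests to `a`, `30` recolorings
with help of `b` and of `c`, and the planned moves of `d` and `e`. -/
def ownBudget (k : ℕ) (a b c d e : V) : V → ℕ := fun v ↦
  if v = a then k - 62 else if v = b ∨ v = c then k - 32 else if v = d then k - 26
    else if v = e then k - 39 else 0

/-- The numbers of recolorings of `b` and `c` with the help of `a`, and of requests to `a`. The
`3 * k + 24` threats to `b` are just avoided by `k - 32` recolorings avoiding `3` of them and `30`
avoiding `4` of them. -/
def helpBudget (a b c : V) : V → ℕ := Pi.single a 60 + Pi.single b 30 + Pi.single c 30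

omit [DecidableRel G.Adj] in
theorem backed_helpBudget (h : IsReducibleConfig G a b c d e) : Backed G a (helpBudget a b c) where
  adj u hu hσ := by
    have : u = b ∨ u = c := by
      by_contra! hbc
      simp [helpBudget, hu, hbc] at hσ
    rcases this with rfl | rfl
    exacts [h.adj_ab, h.adj_ac]
  sum_le := by
    simp [helpBudget, Finset.sum_add_distrib, h.adj_ab, h.adj_ac, h.adj_ab.ne, h.adj_ac.ne]

theorem IsPlan.length_threats_a (hF : IsPlan G L k a b c d e α F)
    (h : IsReducibleConfig G a b c d e) : (threats G a F).length ≤ 3 * k := by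
  have hT : {b, c} ⊆ G.neighborFinset a := by
    simp [Finset.insert_subset_iff, h.adj_ab, h.adj_ac]
  have hlen := length_threats_add_card_mul_le hT fun u _ _ ↦ hF.moveCount_le u
  have := Nat.mul_le_mul_right k h.degree_a
  rw [Finset.card_pair h.adj_bc.ne, Finset.sum_pair h.adj_bc.ne, hF.moveCount_b,
    hF.moveCount_c] at hlen
  omega

theorem IsPlan.length_threats_b (hF : IsPlan G L k a b c d e α F)
    (h : IsReducibleConfig G a b c d e) : (threats G b F).length ≤ 3 * k + 24 := by
  have had : a ≠ d := by grind [h.nodup]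
  have := length_threats_le_of_three_neighbors h.degree_b h.adj_ab.symm h.adj_bc h.adj_bd
    h.adj_ac.ne had h.adj_cd.ne fun u _ ↦ hF.moveCount_le u
  have := hF.moveCount_a
  have := hF.moveCount_c
  have := hF.moveCount_d
  omega

theorem IsPlan.length_threats_c (hF : IsPlan G L k a b c d e α F)
    (h : IsReducibleConfig G a b c d e) : (threats G c F).length ≤ 3 * k + 24 := by
  have had : a ≠ d := by grind [h.nodup]
  have := length_threats_le_of_three_neighbors h.degree_c h.adj_ac.symm h.adj_bc.symm h.adj_cd
    h.adj_ab.ne had h.adj_bd.ne fun u _ ↦ hF.moveCount_le u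
  have := hF.moveCount_a
  have := hF.moveCount_b
  have := hF.moveCount_d
  omega

-- The bound on `k` comes from `a`, which needs `3 * k + 60 ≤ 4 * (k - 62)`.
theorem IsPlan.solvent (hF : IsPlan G L k a b c d e α F) (h : IsReducibleConfig G a b c d e)
    (hk : 308 ≤ k) {v : V} (hv : v ∈ ({a, b, c, d, e} : Set V)) :
    Solvent G a (width a e) F v (α v) (ownBudget k a b c d e v) (helpBudget a b c v) := by
  have hnodup := h.nodup
  have := hF.length_threats_a h
  have := hF.length_threats_b h
  have := hF.length_threats_c h
  have := hF.length_threats_d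
  have := hF.length_threats_e
  refine ⟨0, .inl rfl, ?_⟩
  simp only [List.nodup_cons, List.mem_cons, not_or] at hnodup
  simp only [Set.mem_insert_iff, Set.mem_singleton_iff] at hv
  simp only [width, ownBudget, helpBudget, Pi.add_apply, Pi.single_apply]
  rcases hv with rfl | rfl | rfl | rfl | rfl <;> grind

theorem IsPlan.invariant (hF : IsPlan G L k a b c d e α F) (h : IsReducibleConfig G a b c d e)
    (hk : 308 ≤ k) (hL : ∀ u, 10 ≤ (L u).card) (hα : IsLColoring G L α) :
    Invariant G L {a, b, c, d, e} a (width a e) α F (ownBudget k a b c d e)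
      (helpBudget a b c) where
  isLColoring := hα
  isValid := hF.isValid
  helper_mem := by simp
  moveCount_helper := hF.moveCount_a
  pos v _ := by rw [width]; split_ifs <;> simp
  degree_add_lt v hv := by
    simp only [Set.mem_insert_iff, Set.mem_singleton_iff] at hv
    have := hL v
    rw [width]
    rcases hv with rfl | rfl | rfl | rfl | rfl <;>
      grind [h.degree_a, h.degree_b, h.degree_c, h.degree_d, h.degree_e]
  solvent _ hv := hF.solvent h hk hv

theorem IsPlan.budget_le (hF : IsPlan G L k a b c d e α F) (h : IsReducibleConfig G a b c d e)
    (hk : 62 ≤ k) (v : V) :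
    moveCount F v + (ownBudget k a b c d e v + helpBudget a b c v) + 2 * [e, d, c, b, a].count v ≤
      k := by
  have := hF.moveCount_le v
  have := hF.moveCount_a
  have := hF.moveCount_b
  have := hF.moveCount_c
  have := hF.moveCount_d
  have := hF.moveCount_e
  have hnodup := h.nodup
  simp only [List.nodup_cons, List.mem_cons, not_or] at hnodup
  simp only [ownBudget, helpBudget, Pi.add_apply, Pi.single_apply, List.count_cons, beq_iff_eq,
    List.count_nil]
  by_cases hv : v ∈ [a, b, c, d, e]
  · simp only [List.mem_cons, List.not_mem_nil, or_false] at hv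
    rcases hv with rfl | rfl | rfl | rfl | rfl <;> grind
  · grind

omit [DecidableRel G.Adj] in
theorem recolorable_of_eq_off (h : IsReducibleConfig G a b c d e) (hL : ∀ u, 10 ≤ (L u).card)
    {γ : V → ℕ} (hβ : IsLColoring G L β) (hγ : ∀ u ∉ ({a, b, c, d, e} : Set V), γ u = β u) :
    Recolorable G L (fun v ↦ 2 * [e, d, c, b, a].count v) γ β := by
  refine Script.recolorable_of_eq_off hβ (List.nodup_reverse.2 h.nodup) ?_ fun u hu ↦ hγ u ?_
  · simp only [List.zipIdx_cons, List.zipIdx_nil, List.forall_mem_cons]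
    grind [hL a, hL b, hL c, hL d, hL e, h.degree_a, h.degree_b, h.degree_c, h.degree_d,
      h.degree_e]
  · simp only [Set.mem_insert_iff, Set.mem_singleton_iff]
    simp only [List.mem_cons, List.not_mem_nil] at hu
    tauto

end IsReducibleConfig

theorem stmt_8_general {V : Type} (G : SimpleGraph V) [G.LocallyFinite] {k : ℕ} (hk : 308 ≤ k)
    (L : V → Finset ℕ) (hL : ∀ u, 10 ≤ (L u).card) (α β : V → ℕ) (hα : IsLColoring G L α)
    (hβ : IsLColoring G L β) (a b c d e : V) (hconf : IsReducibleConfig G a b c d e)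
    (hrec : ∃ (m : ℕ) (φ : Fin (m + 1) → ↥(({a, b, c, d, e} : Set V)ᶜ) → ℕ),
      IsRecolSeq (G.induce ({a, b, c, d, e} : Set V)ᶜ) (fun u ↦ L u.1) φ (fun u ↦ α u.1)
        (fun u ↦ β u.1) ∧ ∀ u, recolorCount φ u ≤ k) :
    ∃ (M : ℕ) (ψ : Fin (M + 1) → V → ℕ),
      IsRecolSeq G L ψ α β ∧ ∀ u : V, recolorCount ψ u ≤ k := by
  classical
  obtain ⟨m, φ, hφ, hφk⟩ := hrec
  obtain ⟨F, hF, hzero, hrun, hcount⟩ := Script.exists_isValid_of_isRecolSeq hφ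
  have hFk (u : V) : Script.moveCount F u ≤ k := by
    by_cases hu : u ∈ ({a, b, c, d, e} : Set V)
    · exact (hzero u hu).trans_le k.zero_le
    · exact (hcount ⟨u, hu⟩).trans (hφk _)
  obtain ⟨F', hF', hrun'⟩ := hconf.exists_isPlan (by omega) hL hα hF hzero hFk
  obtain ⟨γ, hαγ, hγ⟩ := (hF'.invariant hconf hk hL hα).exists_recolorable hconf.backed_helpBudget
  have hγβ := hconf.recolorable_of_eq_off hL hβ fun u hu ↦
    (hγ u hu).trans <| (hrun' u hu).trans <| hrun ⟨u, hu⟩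
  obtain ⟨M, ψ, hψ, hψcount⟩ := (hαγ.trans hγβ).exists_isRecolSeq hα
  exact ⟨M, ψ, hψ, fun u ↦ (hψcount u).trans (hF'.budget_le hconf (by omega) u)⟩

/-- configuration RC(c): if `G` contains this configuration and `G − S` has a
`k`-good recoloring sequence between the restrictions of `α` and `β` (`k ≥ 416`),
then `G` has a `k`-good recoloring sequence from `α` to `β`. -/
theorem stmt_8 {V : Type} [Fintype V] [DecidableEq V]
    (G : SimpleGraph V) [DecidableRel G.Adj]
    (k : ℕ) (hk : 416 ≤ k)
    (L : V → Finset ℕ) (hL : ∀ u, (L u).card = 10)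
    (α β : V → ℕ) (hα : IsLColoring G L α) (hβ : IsLColoring G L β)
    (a b c d e : V) (hnodup : ([a, b, c, d, e] : List V).Nodup)
    (he1: G.Adj a b)
    (he2: G.Adj b c)
    (he3: G.Adj c d)
    (he4: G.Adj d e)
    (he5: G.Adj a c)
    (he6: G.Adj b d)
    (hda : G.degree a = 5)
    (hdb : G.degree b = 6)
    (hdc : G.degree c = 6)
    (hdd : G.degree d = 6)
    (hde : G.degree e = 5)
    (S : Set V) (hS : S = {a, b, c, d, e})
    (hrec : ∃ (m : ℕ) (φ : Fin (m + 1) → ↥(Sᶜ) → ℕ),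
      IsRecolSeq (G.induce Sᶜ) (fun u => L u.1) φ (fun u => α u.1) (fun u => β u.1) ∧
      ∀ u : ↥(Sᶜ), recolorCount φ u ≤ k) :
    ∃ (M : ℕ) (ψ : Fin (M + 1) → V → ℕ),
      IsRecolSeq G L ψ α β ∧ ∀ u : V, recolorCount ψ u ≤ k := by
  subst hS
  exact stmt_8_general G (by omega) L (fun u ↦ (hL u).ge) α β hα hβ a b c d e ⟨hnodup, he1, he2,
    he3, he4, he5, he6, hda.le, hdb.le, hdc.le, hdd.le, hde.le⟩ hrec
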